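/- Call a C_8-frame A of type I if ⟨φ,a⟩ ∈ {1/2, −1/2} for every a ∈ A, and of type II if the multiset {⟨φ,a⟩ : a ∈ A} equals {1, 1, −1, −1} together with twelve 0's. Then: (1) every C_8-frame is either of type I or of type II; (2) the set 𝒞_{8,I} of type-I C_8-frames has exactly 72 elements and the set 𝒞_{8,II} of type-II C_8-frames has exactly 63 elements; (3) each of 𝒞_{8,I} and 𝒞_{8,II} is a single orbit under the action of W(E7) on C_8-frames given by A ↦ w(A). -/

import Mathlib

noncomputable section

/-- `V = ℂ^8`. -/
abbrev V8 : Type := Fin 8 → ℂ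

/-- The symmetric bilinear form `⟨x,y⟩ = ∑ᵢ xᵢ yᵢ` on `V`. -/
def ip (x y : V8) : ℂ := ∑ i, x i * y i

/-- `φ = (1/2, …, 1/2)`. -/
def phi8 : V8 := fun _ => (1 : ℂ) / 2

/-- `x` has all coordinates in `ℤ`. -/
def IsIntVec (x : V8) : Prop := ∀ i, ∃ n : ℤ, x i = (n : ℂ)

/-- The `E₈` root lattice `P = {a ∈ ℤ⁸ ∪ (φ + ℤ⁸) : ⟨φ,a⟩ ∈ ℤ}`. -/
def E8lat : Set V8 :=
  {a | (IsIntVec a ∨ IsIntVec (a - phi8)) ∧ ∃ n : ℤ, ip phi8 a = (n : ℂ)}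

/-- A `C_l`-frame relative to `P`: a set `A = {±a₀, …, ±a_{l-1}}` with
`⟨aᵢ,aⱼ⟩ = δᵢⱼ`, `aᵢ ± aⱼ ∈ P` for `i < j`, and `2aᵢ ∈ P`. -/
def IsClFrame (l : ℕ) (A : Set V8) : Prop :=
  ∃ a : Fin l → V8,
    A = Set.range a ∪ Set.range (fun i => -a i) ∧
    (∀ i j, ip (a i) (a j) = if i = j then 1 else 0) ∧
    (∀ i j, i < j → a i + a j ∈ E8lat ∧ a i - a j ∈ E8lat) ∧
    (∀ i, (2 : ℂ) • a i ∈ E8lat)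

/-- `w` is the reflection `r_α(v) = v − ⟨α,v⟩α` for some root `α ∈ Δ(E₇)`,
i.e. `α ∈ Δ(E₈)` with `⟨φ,α⟩ = 0`. -/
def IsE7Reflection (w : V8 ≃ₗ[ℂ] V8) : Prop :=
  ∃ α, α ∈ E8lat ∧ ip α α = 2 ∧ ip phi8 α = 0 ∧ ∀ v, w v = v - ip α v • α

/-- The Weyl group `W(E₇)`, generated by the reflections in roots of `Δ(E₇)`. -/
def WE7 : Subgroup (V8 ≃ₗ[ℂ] V8) := Subgroup.closure {w | IsE7Reflection w}

/-- A `C₈`-frame of type I: all values `⟨φ,a⟩` (`a ∈ A`) lie in `{1/2, −1/2}`. -/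
def C8TypeI (A : Set V8) : Prop :=
  ∀ a ∈ A, ip phi8 a = 1 / 2 ∨ ip phi8 a = -(1 / 2)

/-- A `C₈`-frame of type II: the multiset `{⟨φ,a⟩ : a ∈ A}` consists of `1` twice,
`−1` twice and `0` twelve times. -/
def C8TypeII (A : Set V8) : Prop :=
  {a ∈ A | ip phi8 a = 1}.ncard = 2 ∧ {a ∈ A | ip phi8 a = -1}.ncard = 2 ∧
  {a ∈ A | ip phi8 a = 0}.ncard = 12

/-!
If two `C₈`-frames contain vectors `a` and `b` with `a - b ∈ P`, then all scalar products between
the two frames are integers, and since both are orthonormal the frames coincide. In particular a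
`C₈`-frame is determined by any one of its members.

The numbers `2⟨φ, aᵢ⟩` are integers of equal parity, because `aᵢ - aⱼ ∈ P`, and their squares sum
to `4⟨φ, φ⟩ = 8`. If they are odd they are all `±1`; if they are even, exactly two are `±2`.

In type II, the members with `⟨φ, a⟩ = 1` are the vectors `(φ + α)/2` with `α ∈ Δ(E₇)`. Each root
gives one frame and each frame contains two such vectors, so there are `126/2 = 63` frames, permuted
by `W(E₇)` as transitively as the roots are.

In type I, the reflection `r_φ` commutes with `W(E₇)` and exchanges the frames whose doubled members
have integral coordinates with those for which these are half-integral. A doubled half-integral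
member has odd numerators whose squares sum to `16 = 8 + 8`, so exactly one of them is `±3`, and the
frame is the image of `{±eᵢ}` under the reflection in a root with coordinates `1/2` on a set `T`
and `-1/2` off `T`, where `|T|` is `4` or `8` and, up to complement, `0 ∈ T`: this makes
`35 + 1 = 36` frames. The reflections with `|T| = 4` lie in `W(E₇)`, and some `w ∈ W(E₇)` agrees
with the remaining one, `r_φ`, on the frame `{±eᵢ}`; as `r_φ` commutes with `W(E₇)`, this joins all
`72` frames into one orbit.
-/

theorem ncard_eq_ncard_image_mul {X Y : Type*} {s : Set X} (hs : s.Finite) (f : X → Y) (m : ℕ)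
    (h : ∀ y ∈ f '' s, {x ∈ s | f x = y}.ncard = m) : s.ncard = (f '' s).ncard * m := by
  classical
  lift s to Finset X using hs
  rw [← Finset.coe_image, Set.ncard_coe_finset, Set.ncard_coe_finset, ← smul_eq_mul,
    Finset.card_eq_sum_card_image f s, ← Finset.sum_const]
  refine Finset.sum_congr rfl fun y hy => ?_
  rw [← h y (by exact_mod_cast hy), ← Set.ncard_coe_finset, Finset.coe_filter]
  rfl

section IntegerVectors

variable {ι : Type*} [Fintype ι]

theorem eq_of_dotProduct_sub_self_nonpos {m n : ι → ℤ} (h : (m - n) ⬝ᵥ (m - n) ≤ 0) : m = n :=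
  have h_nonneg : 0 ≤ (m - n) ⬝ᵥ (m - n) := Finset.sum_nonneg fun _ _ => mul_self_nonneg _
  sub_eq_zero.mp <| dotProduct_self_eq_zero.mp <| le_antisymm h h_nonneg

theorem exists_eq_single_of_dotProduct_self_eq_one [DecidableEq ι] {n : ι → ℤ} (h : n ⬝ᵥ n = 1) :
    ∃ i, n = Pi.single i 1 ∨ n = -Pi.single i 1 := by
  obtain ⟨i, hi⟩ : ∃ i, n i ≠ 0 := by
    by_contra! h_zero
    simp [funext h_zero] at h
  have h_pos : 0 < n i → n = Pi.single i 1 := fun hpos =>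
    eq_of_dotProduct_sub_self_nonpos <| by
      simp only [sub_dotProduct, dotProduct_sub, h, single_one_dotProduct, dotProduct_single_one,
        Pi.sub_apply, Pi.single_eq_same]
      lia
  have h_neg : n i < 0 → n = -Pi.single i 1 := fun hneg =>
    eq_of_dotProduct_sub_self_nonpos <| by
      simp only [sub_neg_eq_add, add_dotProduct, dotProduct_add, h, single_one_dotProduct,
        dotProduct_single_one, Pi.add_apply, Pi.single_eq_same]
      lia
  exact ⟨i, hi.lt_or_gt.symm.imp h_pos h_neg⟩

theorem exists_eq_single_sub_single [DecidableEq ι] {n : ι → ℤ} (h : n ⬝ᵥ n = 2)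
    (h_sum : ∑ i, n i = 0) : ∃ i j, i ≠ j ∧ n = Pi.single i 1 - Pi.single j 1 := by
  have h_ne : ∃ i ∈ Finset.univ, n i ≠ 0 := by
    by_contra! h_zero
    simp [funext fun i => h_zero i (Finset.mem_univ i)] at h
  obtain ⟨i, -, hi⟩ := Finset.exists_pos_of_sum_zero_of_exists_nonzero n h_sum h_ne
  obtain ⟨j, -, hj⟩ := Finset.exists_pos_of_sum_zero_of_exists_nonzero (-n)
    (by simpa using h_sum) (by simpa using h_ne)
  rw [Pi.neg_apply] at hj
  have hij : i ≠ j := by rintro rfl; lia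
  refine ⟨i, j, hij, eq_of_dotProduct_sub_self_nonpos ?_⟩
  simp only [sub_dotProduct, dotProduct_sub, h, single_one_dotProduct, dotProduct_single_one,
    Pi.sub_apply, Pi.single_eq_same, Pi.single_eq_of_ne hij, Pi.single_eq_of_ne hij.symm]
  lia

theorem exists_dotProduct_self_eq_sum_add_two_mul (n : ι → ℤ) :
    ∃ k, n ⬝ᵥ n = ∑ i, n i + 2 * k := by
  choose k hk using fun i => (Int.even_mul_pred_self (n i)).two_dvd
  refine ⟨∑ i, k i, ?_⟩
  simp only [dotProduct, Finset.mul_sum, ← Finset.sum_add_distrib, ← hk]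
  exact Finset.sum_congr rfl fun i _ => by ring

theorem exists_eq_three_or_neg_three {m : ι → ℤ} (h_odd : ∀ i, Odd (m i))
    (h : m ⬝ᵥ m = Fintype.card ι + 8) : ∃ i, m i = 3 ∨ m i = -3 := by
  have h_mod : ∀ i, ∃ k, m i * m i = 8 * k + 1 := fun i => by
    obtain ⟨k, hk⟩ := Int.eight_dvd_sq_sub_one_of_odd (h_odd i)
    exact ⟨k, by linarith⟩
  choose k hk using h_mod
  have h_sum : ∑ i, k i = 1 := by
    simp only [dotProduct, hk, Finset.sum_add_distrib, ← Finset.mul_sum, Finset.sum_const,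
      Finset.card_univ, nsmul_eq_mul, mul_one] at h
    lia
  have h_nonneg : ∀ i, 0 ≤ k i := fun i => by nlinarith [hk i, mul_self_nonneg (m i)]
  obtain ⟨i, hi⟩ : ∃ i, 0 < k i := by
    by_contra! h_le
    linarith [Finset.sum_nonpos fun i (_ : i ∈ Finset.univ) => h_le i]
  have h_le : k i ≤ ∑ i, k i :=
    Finset.single_le_sum (fun j _ => h_nonneg j) (Finset.mem_univ i)
  have h_one : k i = 1 := by lia
  refine ⟨i, sq_eq_sq_iff_eq_or_eq_neg.mp ?_⟩
  rw [sq, hk, h_one]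
  norm_num

theorem ncard_level_sets_of_dotProduct_self_eq_two {m : ι → ℤ} (h : m ⬝ᵥ m = 2) :
    {i | m i = 1}.ncard + {i | m i = -1}.ncard = 2 ∧
      {i | m i = 0}.ncard + 2 = Fintype.card ι := by
  have h_values : ∀ i, m i = 0 ∨ m i = 1 ∨ m i = -1 := fun i => by
    have h_le : m i * m i ≤ m ⬝ᵥ m :=
      Finset.single_le_sum (fun j _ => mul_self_nonneg (m j)) (Finset.mem_univ i)
    have h_lt : m i < 2 := by nlinarith
    have h_gt : -2 < m i := by nlinarith
    lia
  have h_ncard : ∀ c, ({i | m i = c}.ncard : ℤ) = ∑ i, if m i = c then 1 else 0 := fun c => by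
    rw [Set.ncard_eq_toFinset_card', Set.toFinset_ofPred, Finset.card_filter]
    push_cast
    rfl
  have h_support : ({i | m i = 1}.ncard : ℤ) + {i | m i = -1}.ncard = 2 := by
    rw [h_ncard, h_ncard, ← Finset.sum_add_distrib, ← h]
    exact Finset.sum_congr rfl fun i _ => by rcases h_values i with hi | hi | hi <;> simp [hi]
  have h_total : ({i | m i = 0}.ncard : ℤ) + 2 = Fintype.card ι := by
    rw [h_ncard, ← h, dotProduct, ← Finset.sum_add_distrib, Fintype.card_eq_sum_ones]
    push_cast
    exact Finset.sum_congr rfl fun i _ => by rcases h_values i with hi | hi | hi <;> simp [hi]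
  exact_mod_cast And.intro h_support h_total

end IntegerVectors

section Lattice

/-- The coordinatewise inclusion of `ℤ⁸` into `V`. -/
def intVec : (Fin 8 → ℤ) →+ V8 := (Int.castAddHom ℂ).compLeft (Fin 8)

theorem intVec_apply (n : Fin 8 → ℤ) (i : Fin 8) : intVec n i = n i := rfl

theorem intVec_single (i : Fin 8) : intVec (Pi.single i 1) = Pi.single i 1 := by
  ext j
  rw [intVec_apply, Pi.single_apply, Pi.single_apply]
  split <;> simp

theorem intVec_dotProduct (m n : Fin 8 → ℤ) : intVec m ⬝ᵥ intVec n = ((m ⬝ᵥ n : ℤ) : ℂ) :=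
  (RingHom.map_dotProduct (Int.castRingHom ℂ) m n).symm

theorem isIntVec_iff {x : V8} : IsIntVec x ↔ x ∈ intVec.range := by
  simp only [IsIntVec, Classical.skolem, AddMonoidHom.mem_range, funext_iff, intVec_apply, eq_comm]

theorem phi8_dotProduct (x : V8) : phi8 ⬝ᵥ x = (∑ i, x i) / 2 := by
  simp only [dotProduct, phi8, ← Finset.mul_sum]
  ring

theorem phi8_dotProduct_intVec (n : Fin 8 → ℤ) : phi8 ⬝ᵥ intVec n = ((∑ i, n i : ℤ) : ℂ) / 2 := by
  simp only [phi8_dotProduct, intVec_apply, Int.cast_sum]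

theorem phi8_dotProduct_self : phi8 ⬝ᵥ phi8 = 2 := by
  simp only [phi8_dotProduct, phi8, Finset.sum_const, Finset.card_univ, Fintype.card_fin]
  norm_num

theorem phi8_add_phi8 : phi8 + phi8 = intVec 1 := by
  ext i
  simp only [Pi.add_apply, phi8, intVec_apply, Pi.one_apply]
  norm_num

/-- The `E₈` root lattice `P`, with its group structure. -/
def E8Lattice : AddSubgroup V8 where
  carrier := E8lat
  zero_mem' := ⟨.inl fun _ => ⟨0, by simp⟩, 0, by simp [ip]⟩
  add_mem' := by
    rintro a b ⟨ha, k, hk⟩ ⟨hb, l, hl⟩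
    refine ⟨?_, k + l, ?_⟩
    · simp only [isIntVec_iff] at ha hb ⊢
      have h_two : phi8 + phi8 ∈ intVec.range := ⟨1, phi8_add_phi8.symm⟩
      rcases ha with ha | ha <;> rcases hb with hb | hb
      · exact .inl (add_mem ha hb)
      · exact .inr (add_sub_assoc a b phi8 ▸ add_mem ha hb)
      · exact .inr (sub_add_eq_add_sub a phi8 b ▸ add_mem ha hb)
      · refine .inl ?_
        convert add_mem (add_mem ha hb) h_two using 1
        abel
    · rw [Int.cast_add, ← hk, ← hl]
      exact dotProduct_add phi8 a b
  neg_mem' := by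
    rintro a ⟨ha, k, hk⟩
    refine ⟨?_, -k, ?_⟩
    · simp only [isIntVec_iff] at ha ⊢
      refine ha.imp neg_mem fun h => ?_
      have h_sub := sub_mem (neg_mem h) (⟨1, phi8_add_phi8.symm⟩ : phi8 + phi8 ∈ intVec.range)
      convert h_sub using 1
      abel
    · rw [Int.cast_neg, ← hk]
      exact dotProduct_neg phi8 a

variable {a b : V8}

theorem exists_intVec_of_mem_E8Lattice (ha : a ∈ E8Lattice) :
    ∃ n, a = intVec n ∨ a = phi8 + intVec n := by
  rcases ha.1 with h | h <;> obtain ⟨n, hn⟩ := isIntVec_iff.mp h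
  · exact ⟨n, .inl hn.symm⟩
  · exact ⟨n, .inr (by rw [hn, add_sub_cancel])⟩

theorem exists_intVec_eq_two_smul (ha : a ∈ E8Lattice) : ∃ n, (2 : ℂ) • a = intVec n := by
  obtain ⟨n, rfl | rfl⟩ := exists_intVec_of_mem_E8Lattice ha
  · exact ⟨n + n, by rw [two_smul, map_add]⟩
  · exact ⟨1 + (n + n), by rw [two_smul, map_add, map_add, ← phi8_add_phi8]; abel⟩

theorem exists_phi8_dotProduct_eq_intCast (ha : a ∈ E8Lattice) : ∃ k : ℤ, phi8 ⬝ᵥ a = k := ha.2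

theorem intVec_mem_E8Lattice {n : Fin 8 → ℤ} (h : Even (∑ i, n i)) : intVec n ∈ E8Lattice := by
  obtain ⟨k, hk⟩ := h
  refine ⟨.inl (isIntVec_iff.mpr ⟨n, rfl⟩), k, ?_⟩
  change phi8 ⬝ᵥ intVec n = k
  rw [phi8_dotProduct_intVec, hk]
  push_cast
  ring

theorem phi8_mem_E8Lattice : phi8 ∈ E8Lattice :=
  ⟨.inr (isIntVec_iff.mpr ⟨0, by simp⟩), 2, phi8_dotProduct_self.trans (by norm_num)⟩

theorem exists_dotProduct_self_eq_two_mul (ha : a ∈ E8Lattice) : ∃ k : ℤ, a ⬝ᵥ a = 2 * k := by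
  obtain ⟨l, hl⟩ := exists_phi8_dotProduct_eq_intCast ha
  obtain ⟨n, rfl | rfl⟩ := exists_intVec_of_mem_E8Lattice ha
  all_goals obtain ⟨k, hk⟩ := exists_dotProduct_self_eq_sum_add_two_mul n
  · refine ⟨l + k, ?_⟩
    rw [phi8_dotProduct_intVec] at hl
    rw [intVec_dotProduct, hk]
    push_cast at hl ⊢
    linear_combination 2 * hl
  · refine ⟨1 + ∑ i, n i + k, ?_⟩
    rw [add_dotProduct, dotProduct_add, dotProduct_add, dotProduct_comm (intVec n) phi8,
      phi8_dotProduct_self, phi8_dotProduct_intVec, intVec_dotProduct, hk]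
    push_cast
    ring

theorem exists_dotProduct_eq_intCast (ha : a ∈ E8Lattice) (hb : b ∈ E8Lattice) :
    ∃ k : ℤ, a ⬝ᵥ b = k := by
  obtain ⟨k, hk⟩ := exists_dotProduct_self_eq_two_mul (add_mem ha hb)
  obtain ⟨l, hl⟩ := exists_dotProduct_self_eq_two_mul ha
  obtain ⟨m, hm⟩ := exists_dotProduct_self_eq_two_mul hb
  refine ⟨k - l - m, ?_⟩
  rw [add_dotProduct, dotProduct_add, dotProduct_add, dotProduct_comm b a] at hk
  push_cast
  linear_combination (hk - hl - hm) / 2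

end Lattice

section Orthonormal

variable {R ι : Type*} [CommRing R] [Fintype ι] [DecidableEq ι] {a : ι → ι → R}

theorem sum_dotProduct_mul_dotProduct (h : ∀ i j, a i ⬝ᵥ a j = if i = j then 1 else 0)
    (x y : ι → R) : ∑ i, (a i ⬝ᵥ x) * (a i ⬝ᵥ y) = x ⬝ᵥ y := by
  have h_mul : Matrix.of a * (Matrix.of a).transpose = 1 := by
    ext i j
    exact (h i j).trans Matrix.one_apply.symm
  calc (Matrix.of a).mulVec x ⬝ᵥ (Matrix.of a).mulVec y
      = x ⬝ᵥ ((Matrix.of a).transpose * Matrix.of a).mulVec y := by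
        rw [← Matrix.mulVec_mulVec, Matrix.dotProduct_mulVec x, Matrix.vecMul_transpose]
    _ = x ⬝ᵥ y := by rw [mul_eq_one_comm.mp h_mul, Matrix.one_mulVec]

theorem eq_of_forall_dotProduct_eq (h : ∀ i j, a i ⬝ᵥ a j = if i = j then 1 else 0)
    {x y : ι → R} (hxy : ∀ i, a i ⬝ᵥ x = a i ⬝ᵥ y) : x = y := by
  refine dotProduct_eq _ _ fun z => ?_
  rw [dotProduct_comm x, dotProduct_comm y, ← sum_dotProduct_mul_dotProduct h,
    ← sum_dotProduct_mul_dotProduct h]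
  simp only [hxy]

end Orthonormal

namespace IsClFrame

variable {l : ℕ} {A B : Set V8} {x y : V8}

theorem dotProduct_self (hA : IsClFrame l A) (hx : x ∈ A) : x ⬝ᵥ x = 1 := by
  obtain ⟨a, rfl, h_ortho, -⟩ := hA
  rcases hx with ⟨i, rfl⟩ | ⟨i, rfl⟩
  · exact (h_ortho i i).trans (if_pos rfl)
  · rw [neg_dotProduct_neg]
    exact (h_ortho i i).trans (if_pos rfl)

theorem neg_mem (hA : IsClFrame l A) (hx : x ∈ A) : -x ∈ A := by
  obtain ⟨a, rfl, -⟩ := hA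
  rcases hx with ⟨i, rfl⟩ | ⟨i, rfl⟩
  · exact .inr ⟨i, rfl⟩
  · exact .inl ⟨i, (neg_neg _).symm⟩

theorem two_smul_mem (hA : IsClFrame l A) (hx : x ∈ A) : (2 : ℂ) • x ∈ E8Lattice := by
  obtain ⟨a, rfl, -, -, h_two⟩ := hA
  rcases hx with ⟨i, rfl⟩ | ⟨i, rfl⟩
  · exact h_two i
  · rw [smul_neg]
    exact E8Lattice.neg_mem (h_two i)

theorem sub_mem (hA : IsClFrame l A) (hx : x ∈ A) (hy : y ∈ A) : x - y ∈ E8Lattice := by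
  obtain ⟨a, rfl, -, h_pair, h_two⟩ := hA
  have h_add : ∀ i j, a i + a j ∈ E8Lattice := fun i j => by
    rcases lt_trichotomy i j with h | rfl | h
    · exact (h_pair i j h).1
    · exact two_smul ℂ (a i) ▸ h_two i
    · exact add_comm (a j) (a i) ▸ (h_pair j i h).1
  have h_sub : ∀ i j, a i - a j ∈ E8Lattice := fun i j => by
    convert E8Lattice.sub_mem (h_add i j) (h_two j) using 1
    rw [two_smul, add_sub_add_right_eq_sub]
  rcases hx with ⟨i, rfl⟩ | ⟨i, rfl⟩ <;> rcases hy with ⟨j, rfl⟩ | ⟨j, rfl⟩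
  · exact h_sub i j
  · simpa only [sub_neg_eq_add] using h_add i j
  · simpa only [neg_add'] using E8Lattice.neg_mem (h_add i j)
  · simpa only [neg_sub_neg] using h_sub j i

theorem subset_of_sub_mem (hA : IsClFrame l A) (hB : IsClFrame 8 B) (hx : x ∈ A) (hy : y ∈ B)
    (hxy : x - y ∈ E8Lattice) : A ⊆ B := by
  intro z hz
  obtain ⟨b, rfl, h_ortho, -⟩ := id hB
  have h_int : ∀ i, ∃ k : ℤ, b i ⬝ᵥ z = k := fun i => by
    have h_mem : z - b i ∈ E8Lattice := by
      convert add_mem (add_mem (hA.sub_mem hz hx) hxy) (hB.sub_mem hy (.inl ⟨i, rfl⟩)) using 1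
      abel
    obtain ⟨k, hk⟩ := exists_dotProduct_self_eq_two_mul h_mem
    refine ⟨1 - k, ?_⟩
    rw [sub_dotProduct, dotProduct_sub, dotProduct_sub, hA.dotProduct_self hz,
      hB.dotProduct_self (.inl ⟨i, rfl⟩), dotProduct_comm z] at hk
    push_cast
    linear_combination -hk / 2
  choose n hn using h_int
  have h_norm : n ⬝ᵥ n = 1 := by
    have h_parseval := sum_dotProduct_mul_dotProduct h_ortho z z
    simp only [hn, hA.dotProduct_self hz] at h_parseval
    exact_mod_cast h_parseval
  obtain ⟨i, rfl | rfl⟩ := exists_eq_single_of_dotProduct_self_eq_one h_norm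
  · refine .inl ⟨i, eq_of_forall_dotProduct_eq h_ortho fun j => ?_⟩
    rw [hn, Pi.single_apply]
    refine (h_ortho j i).trans ?_
    push_cast
    rfl
  · refine .inr ⟨i, eq_of_forall_dotProduct_eq h_ortho fun j => ?_⟩
    rw [hn, dotProduct_neg, Pi.neg_apply, Pi.single_apply]
    refine congrArg Neg.neg (h_ortho j i) |>.trans ?_
    push_cast
    rfl

theorem eq_of_sub_mem (hA : IsClFrame 8 A) (hB : IsClFrame 8 B) (hx : x ∈ A) (hy : y ∈ B)
    (hxy : x - y ∈ E8Lattice) : A = B :=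
  (hA.subset_of_sub_mem hB hx hy hxy).antisymm <|
    hB.subset_of_sub_mem hA hy hx (neg_sub x y ▸ E8Lattice.neg_mem hxy)

theorem eq_of_mem (hA : IsClFrame 8 A) (hB : IsClFrame 8 B) (hx : x ∈ A) (hy : x ∈ B) : A = B :=
  hA.eq_of_sub_mem hB hx hy (by rw [sub_self]; exact E8Lattice.zero_mem)

end IsClFrame

section Types

variable {l : ℕ} {A : Set V8} {x y : V8}

theorem ncard_setOf_mem_range_union_range_neg {a : Fin l → V8}
    (h : ∀ i j, a i ⬝ᵥ a j = if i = j then 1 else 0) (p : V8 → Prop) :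
    {x ∈ Set.range a ∪ Set.range (fun i => -a i) | p x}.ncard =
      {i | p (a i)}.ncard + {i | p (-a i)}.ncard := by
  have h_inj : Function.Injective a := fun i j hij => by
    by_contra h_ne
    have h_zero := h i j
    rw [← hij, h, if_pos rfl, if_neg h_ne] at h_zero
    exact one_ne_zero h_zero
  have h_neg : ∀ i j, a i ≠ -a j := fun i j hij => by
    have h_norm := h i i
    nth_rw 2 [hij] at h_norm
    rw [dotProduct_neg, h, if_pos rfl] at h_norm
    split at h_norm <;> norm_num at h_norm
  have h_union : {x ∈ Set.range a ∪ Set.range (fun i => -a i) | p x} =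
      a '' {i | p (a i)} ∪ (fun i => -a i) '' {i | p (-a i)} := by
    aesop
  have h_disjoint : Disjoint (a '' {i | p (a i)}) ((fun i => -a i) '' {i | p (-a i)}) := by
    rw [Set.disjoint_left]
    rintro _ ⟨i, -, rfl⟩ ⟨j, -, hj⟩
    exact h_neg i j hj.symm
  rw [h_union, Set.ncard_union_eq h_disjoint, Set.ncard_image_of_injective _ h_inj,
    Set.ncard_image_of_injective (f := fun i => -a i) _ (neg_injective.comp h_inj)]

namespace IsClFrame

theorem exists_two_mul_phi8_dotProduct (hA : IsClFrame l A) (hx : x ∈ A) :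
    ∃ k : ℤ, 2 * (phi8 ⬝ᵥ x) = k := by
  obtain ⟨k, hk⟩ := exists_phi8_dotProduct_eq_intCast (hA.two_smul_mem hx)
  exact ⟨k, by rwa [dotProduct_smul, smul_eq_mul] at hk⟩

theorem even_sub (hA : IsClFrame l A) (hx : x ∈ A) (hy : y ∈ A) {j k : ℤ}
    (hj : 2 * (phi8 ⬝ᵥ x) = j) (hk : 2 * (phi8 ⬝ᵥ y) = k) : Even (j - k) := by
  obtain ⟨m, hm⟩ := exists_phi8_dotProduct_eq_intCast (hA.sub_mem hx hy)
  refine ⟨m, ?_⟩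
  rw [dotProduct_sub] at hm
  have h_cast : ((j - k : ℤ) : ℂ) = ((m + m : ℤ) : ℂ) := by
    push_cast
    linear_combination 2 * hm - hj + hk
  exact_mod_cast h_cast

theorem exists_phi8_coords (hA : IsClFrame 8 A) :
    ∃ (a : Fin 8 → V8) (n : Fin 8 → ℤ), A = Set.range a ∪ Set.range (fun i => -a i) ∧
      (∀ i j, a i ⬝ᵥ a j = if i = j then 1 else 0) ∧
      (∀ i, 2 * (phi8 ⬝ᵥ a i) = n i) ∧ n ⬝ᵥ n = 8 := by
  obtain ⟨a, rfl, h_ortho, -⟩ := id hA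
  choose n hn using fun i => hA.exists_two_mul_phi8_dotProduct (.inl ⟨i, rfl⟩)
  refine ⟨a, n, rfl, h_ortho, hn, ?_⟩
  have h_sum : ∑ i, (n i : ℂ) * n i = 8 := calc
    ∑ i, (n i : ℂ) * n i = 4 * ∑ i, (a i ⬝ᵥ phi8) * (a i ⬝ᵥ phi8) := by
      rw [Finset.mul_sum]
      refine Finset.sum_congr rfl fun i _ => ?_
      rw [← hn, dotProduct_comm phi8]
      ring
    _ = 8 := by
      rw [sum_dotProduct_mul_dotProduct h_ortho, phi8_dotProduct_self]
      norm_num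
  change ∑ i, n i * n i = 8
  exact_mod_cast h_sum

theorem c8TypeI_of_odd (hA : IsClFrame 8 A) (hx : x ∈ A) {k : ℤ} (hk : Odd k)
    (hxk : 2 * (phi8 ⬝ᵥ x) = k) : C8TypeI A := by
  obtain ⟨a, n, rfl, -, hn, h_norm⟩ := hA.exists_phi8_coords
  have h_odd : ∀ i, Odd (n i) := fun i => by
    rw [← Int.not_even_iff_odd] at hk ⊢
    exact fun h => hk ((Int.even_sub.mp (hA.even_sub hx (.inl ⟨i, rfl⟩) hxk (hn i))).mpr h)
  have h_one_le : ∀ i, 1 ≤ n i * n i := fun i => by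
    have h_ne : n i ≠ 0 := fun h => Int.not_odd_zero (h ▸ h_odd i)
    nlinarith [mul_self_pos.mpr h_ne]
  have h_sum : ∑ i, n i * n i = ∑ _i : Fin 8, 1 := h_norm.trans (by simp)
  have h_eq : ∀ i, n i = 1 ∨ n i = -1 := fun i =>
    mul_self_eq_one_iff.mp <| .symm <|
      (Finset.sum_eq_sum_iff_of_le fun i _ => h_one_le i).mp h_sum.symm i (Finset.mem_univ i)
  have h_phi : ∀ i, phi8 ⬝ᵥ a i = 1 / 2 ∨ phi8 ⬝ᵥ a i = -(1 / 2) := fun i => by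
    refine (h_eq i).imp (fun h => ?_) fun h => ?_ <;>
    · have h_two := hn i
      rw [h] at h_two
      push_cast at h_two
      linear_combination h_two / 2
  rintro _ (⟨i, rfl⟩ | ⟨i, rfl⟩)
  · exact h_phi i
  · change phi8 ⬝ᵥ -a i = _ ∨ phi8 ⬝ᵥ -a i = _
    rw [dotProduct_neg, neg_inj, neg_eq_iff_eq_neg]
    exact (h_phi i).symm

theorem c8TypeII_of_integral (hA : IsClFrame 8 A) (hx : x ∈ A) {k : ℤ}
    (hxk : phi8 ⬝ᵥ x = k) : C8TypeII A := by
  obtain ⟨a, n, rfl, h_ortho, hn, h_norm⟩ := hA.exists_phi8_coords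
  have h_even : ∀ i, Even (n i) := fun i => by
    have h_sub := hA.even_sub hx (.inl ⟨i, rfl⟩) (j := 2 * k) (by rw [hxk]; push_cast; rfl) (hn i)
    rwa [Int.even_sub, iff_true_left (even_two_mul k)] at h_sub
  choose m hm using fun i => (h_even i).two_dvd
  have h_phi : ∀ i, phi8 ⬝ᵥ a i = m i := fun i => by
    have h_two := hn i
    rw [hm] at h_two
    push_cast at h_two
    linear_combination h_two / 2
  have h_norm_half : m ⬝ᵥ m = 2 := by
    obtain rfl : n = 2 • m := funext fun i => by rw [hm, Pi.smul_apply, two_nsmul, two_mul]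
    rw [smul_dotProduct, dotProduct_smul] at h_norm
    lia
  obtain ⟨h_unit, h_zero⟩ := ncard_level_sets_of_dotProduct_self_eq_two h_norm_half
  have h_ncard : ∀ c : ℤ, {x ∈ Set.range a ∪ Set.range (fun i => -a i) | ip phi8 x = c}.ncard =
      {i | m i = c}.ncard + {i | m i = -c}.ncard := fun c => by
    have h_pos : ∀ i, ip phi8 (a i) = c ↔ m i = c := fun i => by
      rw [← Int.cast_inj (α := ℂ), ← h_phi]
      rfl
    have h_neg : ∀ i, ip phi8 (-a i) = c ↔ m i = -c := fun i => by
      rw [← Int.cast_inj (α := ℂ), ← h_phi, Int.cast_neg, ← neg_eq_iff_eq_neg, ← dotProduct_neg]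
      rfl
    simp only [ncard_setOf_mem_range_union_range_neg h_ortho, h_pos, h_neg]
  have h_ncard_one := (h_ncard 1).trans h_unit
  have h_ncard_neg_one := h_ncard (-1)
  have h_ncard_zero := h_ncard 0
  rw [Fintype.card_fin] at h_zero
  push_cast at h_ncard_one h_ncard_neg_one h_ncard_zero
  rw [neg_zero] at h_ncard_zero
  exact ⟨h_ncard_one, by lia, by lia⟩

theorem c8TypeI_or_c8TypeII (hA : IsClFrame 8 A) : C8TypeI A ∨ C8TypeII A := by
  obtain ⟨a, n, rfl, -, hn, -⟩ := hA.exists_phi8_coords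
  obtain ⟨k, hk⟩ | h_odd := Int.even_or_odd (n 0)
  · refine .inr (hA.c8TypeII_of_integral (x := a 0) (k := k) (.inl ⟨0, rfl⟩) ?_)
    have h_two := hn 0
    rw [hk] at h_two
    push_cast at h_two
    linear_combination h_two / 2
  · exact .inl (hA.c8TypeI_of_odd (.inl ⟨0, rfl⟩) h_odd (hn 0))

end IsClFrame

end Types

open scoped Pointwise

section Groups

/-- The reflection `r_α` in a vector `α` with `⟨α, α⟩ = 2`. -/
def rootReflection (α : V8) (hα : α ⬝ᵥ α = 2) : V8 ≃ₗ[ℂ] V8 :=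
  Module.reflection (x := α) (f := dotProductEquiv ℂ (Fin 8) α) hα

/-- The automorphism group of the lattice `P` with its bilinear form. -/
def E8Aut : Subgroup (V8 ≃ₗ[ℂ] V8) where
  carrier := {w | (∀ x y, w x ⬝ᵥ w y = x ⬝ᵥ y) ∧ ∀ x, w x ∈ E8Lattice ↔ x ∈ E8Lattice}
  one_mem' := ⟨fun _ _ => rfl, fun _ => Iff.rfl⟩
  mul_mem' := fun ⟨hv, hv'⟩ ⟨hw, hw'⟩ =>
    ⟨fun x y => (hv _ _).trans (hw x y), fun x => (hv' _).trans (hw' x)⟩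
  inv_mem' := fun {w} ⟨hw, hw'⟩ =>
    ⟨fun x y => by
      rw [← hw]
      exact congrArg₂ _ (w.apply_symm_apply x) (w.apply_symm_apply y),
    fun x => by
      rw [← hw']
      exact iff_of_eq (congrArg _ (w.apply_symm_apply x))⟩

variable {l : ℕ} {A : Set V8} {w : V8 ≃ₗ[ℂ] V8} {α : V8}

theorem rootReflection_apply (hα : α ⬝ᵥ α = 2) (x : V8) :
    rootReflection α hα x = x - (α ⬝ᵥ x) • α := rfl

theorem rootReflection_self (hα : α ⬝ᵥ α = 2) : rootReflection α hα α = -α :=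
  Module.reflection_apply_self hα

theorem involutive_rootReflection (hα : α ⬝ᵥ α = 2) :
    Function.Involutive (rootReflection α hα) :=
  Module.involutive_reflection (f := dotProductEquiv ℂ (Fin 8) α) hα

theorem rootReflection_mul_self (hα : α ⬝ᵥ α = 2) :
    rootReflection α hα * rootReflection α hα = 1 :=
  LinearEquiv.ext (involutive_rootReflection hα)

theorem rootReflection_mem_E8Aut (hα : α ⬝ᵥ α = 2) (h_mem : α ∈ E8Lattice) :
    rootReflection α hα ∈ E8Aut := by
  have h_preserves : ∀ x ∈ E8Lattice, rootReflection α hα x ∈ E8Lattice := fun x hx => by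
    obtain ⟨k, hk⟩ := exists_dotProduct_eq_intCast h_mem hx
    rw [rootReflection_apply, hk, Int.cast_smul_eq_zsmul]
    exact sub_mem hx (zsmul_mem h_mem k)
  refine ⟨fun x y => ?_, fun x => ⟨fun hx => ?_, h_preserves x⟩⟩
  · simp only [rootReflection_apply, sub_dotProduct, dotProduct_sub, smul_dotProduct,
      dotProduct_smul, smul_eq_mul, hα, dotProduct_comm x α]
    ring
  · rw [← involutive_rootReflection hα x]
    exact h_preserves _ hx

theorem rootReflection_mem_WE7 (hα : α ⬝ᵥ α = 2) (h_mem : α ∈ E8Lattice)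
    (h_phi : phi8 ⬝ᵥ α = 0) : rootReflection α hα ∈ WE7 :=
  Subgroup.subset_closure ⟨α, h_mem, hα, h_phi, rootReflection_apply hα⟩

theorem WE7_le : WE7 ≤ E8Aut ⊓ MulAction.stabilizer (V8 ≃ₗ[ℂ] V8) phi8 := by
  refine (Subgroup.closure_le _).mpr ?_
  rintro w ⟨α, h_mem, (hα : α ⬝ᵥ α = 2), (h_phi : phi8 ⬝ᵥ α = 0), hw⟩
  obtain rfl : w = rootReflection α hα := LinearEquiv.ext hw
  refine ⟨rootReflection_mem_E8Aut hα h_mem, ?_⟩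
  have h_perp : α ⬝ᵥ phi8 = 0 := dotProduct_comm α phi8 ▸ h_phi
  change rootReflection α hα phi8 = phi8
  rw [rootReflection_apply, h_perp, zero_smul, sub_zero]

theorem phi8_dotProduct_of_mem_WE7 (hw : w ∈ WE7) (x : V8) : phi8 ⬝ᵥ w x = phi8 ⬝ᵥ x := by
  obtain ⟨⟨h_form, -⟩, h_stab⟩ := WE7_le hw
  nth_rw 1 [← show w phi8 = phi8 from h_stab, h_form]

/-- The reflection `r_φ`; it belongs to `W(E₈)` but not to `W(E₇)`. -/
def phi8Reflection : V8 ≃ₗ[ℂ] V8 := rootReflection phi8 phi8_dotProduct_self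

theorem phi8Reflection_apply (x : V8) : phi8Reflection x = x - (phi8 ⬝ᵥ x) • phi8 := rfl

theorem commute_phi8Reflection (hw : w ∈ WE7) : Commute w phi8Reflection := by
  refine LinearEquiv.ext fun x => ?_
  rw [LinearEquiv.mul_apply, LinearEquiv.mul_apply, phi8Reflection_apply, phi8Reflection_apply,
    phi8_dotProduct_of_mem_WE7 hw, map_sub, map_smul, show w phi8 = phi8 from (WE7_le hw).2]

theorem IsClFrame.smul (hA : IsClFrame l A) (hw : w ∈ E8Aut) : IsClFrame l (w • A) := by
  obtain ⟨a, rfl, h_ortho, h_pair, h_two⟩ := hA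
  obtain ⟨h_form, h_lattice⟩ := hw
  refine ⟨fun i => w (a i), ?_, fun i j => (h_form _ _).trans (h_ortho i j), fun i j hij => ?_,
    fun i => ?_⟩
  · rw [Set.smul_set_union, Set.smul_set_range, Set.smul_set_range]
    simp only [smul_neg]
    rfl
  · rw [← map_add, ← map_sub]
    exact (h_pair i j hij).imp (h_lattice _).mpr (h_lattice _).mpr
  · rw [← map_smul]
    exact (h_lattice _).mpr (h_two i)

/-- The set `𝒞_{8,I}` of `C₈`-frames of type I. -/
def typeIFrames : Set (Set V8) := {A | IsClFrame 8 A ∧ C8TypeI A}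

/-- The set `𝒞_{8,II}` of `C₈`-frames of type II. -/
def typeIIFrames : Set (Set V8) := {A | IsClFrame 8 A ∧ C8TypeII A}

theorem C8TypeII.exists_phi8_dotProduct_eq_one (hA : C8TypeII A) : ∃ a ∈ A, phi8 ⬝ᵥ a = 1 :=
  Set.nonempty_of_ncard_ne_zero (hA.1.trans_ne two_ne_zero)

theorem smul_mem_typeIFrames (hw : w ∈ WE7) (hA : A ∈ typeIFrames) : w • A ∈ typeIFrames := by
  refine ⟨hA.1.smul (WE7_le hw).1, ?_⟩
  rintro _ ⟨a, ha, rfl⟩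
  change phi8 ⬝ᵥ w a = _ ∨ phi8 ⬝ᵥ w a = _
  rw [phi8_dotProduct_of_mem_WE7 hw]
  exact hA.2 a ha

theorem smul_mem_typeIIFrames (hw : w ∈ WE7) (hA : A ∈ typeIIFrames) :
    w • A ∈ typeIIFrames := by
  have h_frame := hA.1.smul (WE7_le hw).1
  obtain ⟨a, ha, h_one⟩ := hA.2.exists_phi8_dotProduct_eq_one
  refine ⟨h_frame, h_frame.c8TypeII_of_integral (k := 1) (Set.smul_mem_smul_set ha) ?_⟩
  exact (phi8_dotProduct_of_mem_WE7 hw a).trans (h_one.trans Int.cast_one.symm)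

end Groups

section Roots

variable {T : Finset (Fin 8)} {i j : Fin 8} {α : V8}

/-- The vector with entries `1/2` on `T` and `-1/2` off `T`, that is, the sum of the `e_i` for
`i ∈ T` minus `φ`; it is a root of `E₈` when `T` has even cardinality. -/
def spinRoot (T : Finset (Fin 8)) : V8 := fun i => if i ∈ T then 1 / 2 else -(1 / 2)

/-- The root `e_i - e_j` of `E₇` (for `i ≠ j`). -/
def diffRoot (i j : Fin 8) : V8 := Pi.single i 1 - Pi.single j 1

/-- The root system `Δ(E₇)`. -/
def E7Roots : Set V8 := {α | α ∈ E8Lattice ∧ α ⬝ᵥ α = 2 ∧ phi8 ⬝ᵥ α = 0}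

theorem spinRoot_apply_of_mem (h : i ∈ T) : spinRoot T i = 1 / 2 := if_pos h

theorem spinRoot_apply_of_notMem (h : i ∉ T) : spinRoot T i = -(1 / 2) := if_neg h

theorem spinRoot_injective : Function.Injective spinRoot := fun S T h => by
  ext i
  have h_apply := congrFun h i
  simp only [spinRoot] at h_apply
  split_ifs at h_apply with hS hT hT
  · exact iff_of_true hS hT
  · norm_num at h_apply
  · norm_num at h_apply
  · exact iff_of_false hS hT

theorem spinRoot_univ : spinRoot Finset.univ = phi8 :=
  funext fun i => spinRoot_apply_of_mem (Finset.mem_univ i)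

theorem spinRoot_compl (T : Finset (Fin 8)) : spinRoot Tᶜ = -spinRoot T := by
  ext i
  simp only [spinRoot, Finset.mem_compl, Pi.neg_apply]
  split_ifs <;> simp

theorem spinRoot_eq (T : Finset (Fin 8)) :
    spinRoot T = intVec (fun i => if i ∈ T then 1 else 0) - phi8 := by
  ext i
  simp only [spinRoot, Pi.sub_apply, intVec_apply, phi8]
  split_ifs <;> norm_num

theorem spinRoot_dotProduct_self (T : Finset (Fin 8)) : spinRoot T ⬝ᵥ spinRoot T = 2 := by
  have h_sq : ∀ i, spinRoot T i * spinRoot T i = 1 / 4 := fun i => by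
    rw [spinRoot]
    split_ifs <;> norm_num
  simp only [dotProduct, h_sq, Finset.sum_const, Finset.card_univ, Fintype.card_fin]
  norm_num

theorem phi8_dotProduct_spinRoot (T : Finset (Fin 8)) : phi8 ⬝ᵥ spinRoot T = T.card / 2 - 2 := by
  rw [spinRoot_eq, dotProduct_sub, phi8_dotProduct_self, phi8_dotProduct_intVec,
    Finset.sum_ite_mem, Finset.univ_inter, Finset.sum_const, nsmul_one, Int.cast_natCast]

theorem phi8_dotProduct_single (i : Fin 8) : phi8 ⬝ᵥ Pi.single i 1 = 1 / 2 :=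
  dotProduct_single_one phi8 i

theorem spinRoot_mem_E8Lattice (hT : Even T.card) : spinRoot T ∈ E8Lattice := by
  rw [spinRoot_eq]
  refine sub_mem (intVec_mem_E8Lattice ?_) phi8_mem_E8Lattice
  rw [Finset.sum_ite_mem, Finset.univ_inter, Finset.sum_const, nsmul_one]
  exact_mod_cast hT

theorem exists_eq_spinRoot {n : Fin 8 → ℤ}
    (h : (phi8 + intVec n) ⬝ᵥ (phi8 + intVec n) = 2) : ∃ T, phi8 + intVec n = spinRoot T := by
  have h_sum : ∑ i, n i * (n i + 1) = 0 := by
    rw [add_dotProduct, dotProduct_add, dotProduct_add, dotProduct_comm (intVec n) phi8,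
      phi8_dotProduct_self, phi8_dotProduct_intVec, intVec_dotProduct] at h
    have h_cast : ((n ⬝ᵥ n + ∑ i, n i : ℤ) : ℂ) = 0 := by
      push_cast at h ⊢
      linear_combination h
    simp only [mul_add, mul_one, Finset.sum_add_distrib]
    exact_mod_cast h_cast
  have h_values : ∀ i, n i = 0 ∨ n i = -1 := fun i => by
    have h_nonneg : ∀ i ∈ Finset.univ, 0 ≤ n i * (n i + 1) := fun i _ => by
      rcases le_or_gt 0 (n i) with h | h <;> nlinarith
    rw [Finset.sum_eq_zero_iff_of_nonneg h_nonneg] at h_sum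
    exact (mul_eq_zero.mp (h_sum i (Finset.mem_univ i))).imp_right eq_neg_of_add_eq_zero_left
  refine ⟨Finset.univ.filter (n · = 0), funext fun i => ?_⟩
  rcases h_values i with h | h <;>
    norm_num [spinRoot, phi8, intVec_apply, h]

theorem diffRoot_eq_intVec (i j : Fin 8) :
    diffRoot i j = intVec (Pi.single i 1 - Pi.single j 1) := by
  rw [map_sub, intVec_single, intVec_single, diffRoot]

theorem diffRoot_dotProduct (i j : Fin 8) (x : V8) : diffRoot i j ⬝ᵥ x = x i - x j := by
  rw [diffRoot, sub_dotProduct, single_one_dotProduct, single_one_dotProduct]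

theorem diffRoot_apply_left (hij : i ≠ j) : diffRoot i j i = 1 := by
  rw [diffRoot, Pi.sub_apply, Pi.single_eq_same, Pi.single_eq_of_ne hij, sub_zero]

theorem diffRoot_apply_right (hij : i ≠ j) : diffRoot i j j = -1 := by
  rw [diffRoot, Pi.sub_apply, Pi.single_eq_same, Pi.single_eq_of_ne hij.symm, zero_sub]

theorem diffRoot_mem_E7Roots (hij : i ≠ j) : diffRoot i j ∈ E7Roots := by
  refine ⟨?_, ?_, ?_⟩
  · rw [diffRoot_eq_intVec]
    refine intVec_mem_E8Lattice ?_
    simp only [Pi.sub_apply, Finset.sum_sub_distrib, Finset.sum_pi_single', Finset.mem_univ,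
      if_true, sub_self, Even.zero]
  · rw [diffRoot_dotProduct, diffRoot_apply_left hij, diffRoot_apply_right hij]
    norm_num
  · rw [dotProduct_comm, diffRoot_dotProduct]
    exact sub_self _

theorem spinRoot_mem_E7Roots (hT : T.card = 4) : spinRoot T ∈ E7Roots := by
  refine ⟨spinRoot_mem_E8Lattice (hT ▸ by decide), spinRoot_dotProduct_self T, ?_⟩
  rw [phi8_dotProduct_spinRoot, hT]
  norm_num

theorem mem_E7Roots_iff :
    α ∈ E7Roots ↔ (∃ i j, i ≠ j ∧ α = diffRoot i j) ∨ ∃ T, T.card = 4 ∧ α = spinRoot T := by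
  constructor
  · rintro ⟨h_mem, h_norm, h_phi⟩
    obtain ⟨n, rfl | rfl⟩ := exists_intVec_of_mem_E8Lattice h_mem
    · have h_sum : ∑ i, n i = 0 := by
        rw [phi8_dotProduct_intVec, div_eq_zero_iff, or_iff_left two_ne_zero] at h_phi
        exact_mod_cast h_phi
      rw [intVec_dotProduct] at h_norm
      obtain ⟨i, j, hij, rfl⟩ := exists_eq_single_sub_single (by exact_mod_cast h_norm) h_sum
      exact .inl ⟨i, j, hij, (diffRoot_eq_intVec i j).symm⟩
    · obtain ⟨T, hT⟩ := exists_eq_spinRoot h_norm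
      rw [hT, phi8_dotProduct_spinRoot] at h_phi
      have h_card : (T.card : ℂ) = (4 : ℕ) := by
        push_cast
        linear_combination 2 * h_phi
      exact .inr ⟨T, by exact_mod_cast h_card, hT⟩
  · rintro (⟨i, j, hij, rfl⟩ | ⟨T, hT, rfl⟩)
    · exact diffRoot_mem_E7Roots hij
    · exact spinRoot_mem_E7Roots hT

theorem injOn_diffRoot : Set.InjOn (fun p : Fin 8 × Fin 8 => diffRoot p.1 p.2)
    (Finset.univ.offDiag : Finset (Fin 8 × Fin 8)) := by
  rintro ⟨i, j⟩ hij ⟨k, l⟩ - h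
  have h_ne : i ≠ j := by simpa using hij
  have h_left := (congrFun h i).symm.trans (diffRoot_apply_left h_ne)
  have h_right := (congrFun h j).symm.trans (diffRoot_apply_right h_ne)
  simp only [diffRoot, Pi.sub_apply, Pi.single_apply] at h_left h_right
  grind

theorem ncard_E7Roots : E7Roots.ncard = 126 := by
  have h_union : E7Roots = (fun p : Fin 8 × Fin 8 => diffRoot p.1 p.2) ''
      (Finset.univ.offDiag : Finset (Fin 8 × Fin 8)) ∪
      spinRoot '' (Finset.univ.powersetCard 4 : Finset (Finset (Fin 8))) := by
    ext α
    rw [mem_E7Roots_iff]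
    simp [eq_comm]
  have h_disjoint : Disjoint ((fun p : Fin 8 × Fin 8 => diffRoot p.1 p.2) ''
      (Finset.univ.offDiag : Finset (Fin 8 × Fin 8)))
      (spinRoot '' (Finset.univ.powersetCard 4 : Finset (Finset (Fin 8)))) := by
    rw [Set.disjoint_left]
    rintro _ ⟨⟨i, j⟩, hij, rfl⟩ ⟨T, -, hT⟩
    have h_apply : spinRoot T i = diffRoot i j i := congrFun hT i
    rw [diffRoot_apply_left (by simpa using hij), spinRoot] at h_apply
    split_ifs at h_apply <;> norm_num at h_apply
  rw [h_union, Set.ncard_union_eq h_disjoint, injOn_diffRoot.ncard_image,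
    Set.ncard_image_of_injective _ spinRoot_injective, Set.ncard_coe_finset,
    Set.ncard_coe_finset]
  rfl

end Roots

section StandardFrame

variable {T : Finset (Fin 8)} {i : Fin 8}

/-- The frame of the vectors `±e_i`. -/
def stdFrame : Set V8 :=
  Set.range (fun i => Pi.single i 1) ∪ Set.range (fun i => -Pi.single i 1)

/-- The reflection in `spinRoot T`. -/
def spinReflection (T : Finset (Fin 8)) : V8 ≃ₗ[ℂ] V8 :=
  rootReflection (spinRoot T) (spinRoot_dotProduct_self T)

theorem single_mem_stdFrame (i : Fin 8) : Pi.single i 1 ∈ stdFrame := .inl ⟨i, rfl⟩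

theorem isClFrame_stdFrame : IsClFrame 8 stdFrame := by
  refine ⟨fun i => Pi.single i 1, rfl, fun i j => ?_, fun i j _ => ?_, fun i => ?_⟩
  · exact (single_one_dotProduct _ _).trans (Pi.single_apply _ _ _)
  · simp only [← intVec_single, ← map_add, ← map_sub]
    constructor <;> refine intVec_mem_E8Lattice ?_ <;>
      simp only [Pi.add_apply, Pi.sub_apply, Finset.sum_add_distrib, Finset.sum_sub_distrib,
        Finset.sum_pi_single', Finset.mem_univ, if_true] <;> decide
  · simp only [two_smul, ← intVec_single, ← map_add]
    refine intVec_mem_E8Lattice ⟨1, ?_⟩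
    simp only [Pi.add_apply, Finset.sum_add_distrib, Finset.sum_pi_single', Finset.mem_univ,
      if_true]

theorem spinReflection_mem_E8Aut (hT : Even T.card) : spinReflection T ∈ E8Aut :=
  rootReflection_mem_E8Aut _ (spinRoot_mem_E8Lattice hT)

theorem spinReflection_single_mem (T : Finset (Fin 8)) (i : Fin 8) :
    spinReflection T (Pi.single i 1) ∈ spinReflection T • stdFrame :=
  Set.smul_mem_smul_set (single_mem_stdFrame i)

theorem spinReflection_single (hi : i ∈ T) :
    spinReflection T (Pi.single i 1) = Pi.single i 1 - (1 / 2 : ℂ) • spinRoot T := by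
  rw [spinReflection, rootReflection_apply, dotProduct_single_one, spinRoot_apply_of_mem hi]

theorem phi8_dotProduct_spinReflection_single (hi : i ∈ T) :
    phi8 ⬝ᵥ spinReflection T (Pi.single i 1) = 3 / 2 - T.card / 4 := by
  rw [spinReflection_single hi, dotProduct_sub, dotProduct_smul, phi8_dotProduct_single,
    phi8_dotProduct_spinRoot, smul_eq_mul]
  ring

end StandardFrame

section RootOrbits

variable {α β : V8} {i j k l m : Fin 8}

theorem orbit_WE7_eq_of_dotProduct_eq_one (hα : α ∈ E7Roots) (hβ : β ∈ E7Roots)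
    (h : α ⬝ᵥ β = 1) : MulAction.orbit WE7 α = MulAction.orbit WE7 β := by
  obtain ⟨hα_mem, hα_norm, hα_phi⟩ := hα
  obtain ⟨hβ_mem, hβ_norm, hβ_phi⟩ := hβ
  have h_norm : (α - β) ⬝ᵥ (α - β) = 2 := by
    rw [sub_dotProduct, dotProduct_sub, dotProduct_sub, dotProduct_comm β α, hα_norm, hβ_norm, h]
    norm_num
  have h_mem : rootReflection (α - β) h_norm ∈ WE7 :=
    rootReflection_mem_WE7 h_norm (sub_mem hα_mem hβ_mem) (by
      rw [dotProduct_sub, hα_phi, hβ_phi, sub_zero])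
  have h_apply : rootReflection (α - β) h_norm α = β := by
    rw [rootReflection_apply, sub_dotProduct, dotProduct_comm β, hα_norm, h,
      show (2 - 1 : ℂ) = 1 by norm_num, one_smul, sub_sub_cancel]
  exact (MulAction.orbit_eq_iff.mpr ⟨⟨_, h_mem⟩, h_apply⟩).symm

theorem orbit_WE7_neg (hα : α ∈ E7Roots) :
    MulAction.orbit WE7 (-α) = MulAction.orbit WE7 α :=
  MulAction.orbit_eq_iff.mpr
    ⟨⟨_, rootReflection_mem_WE7 hα.2.1 hα.1 hα.2.2⟩, rootReflection_self hα.2.1⟩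

theorem orbit_WE7_diffRoot_left (hij : i ≠ j) (him : i ≠ m) :
    MulAction.orbit WE7 (diffRoot i j) = MulAction.orbit WE7 (diffRoot i m) := by
  rcases eq_or_ne j m with rfl | hjm
  · rfl
  · refine orbit_WE7_eq_of_dotProduct_eq_one (diffRoot_mem_E7Roots hij)
      (diffRoot_mem_E7Roots him) ?_
    rw [diffRoot_dotProduct, diffRoot_apply_left him, diffRoot, Pi.sub_apply,
      Pi.single_eq_of_ne hij.symm, Pi.single_eq_of_ne hjm, sub_zero, sub_zero]

theorem orbit_WE7_diffRoot_swap (hij : i ≠ j) :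
    MulAction.orbit WE7 (diffRoot j i) = MulAction.orbit WE7 (diffRoot i j) := by
  rw [← orbit_WE7_neg (diffRoot_mem_E7Roots hij), diffRoot, diffRoot, neg_sub]

theorem orbit_WE7_diffRoot (hij : i ≠ j) (hkl : k ≠ l) :
    MulAction.orbit WE7 (diffRoot i j) = MulAction.orbit WE7 (diffRoot k l) := by
  have h_third : ∀ i k : Fin 8, ∃ m, i ≠ m ∧ k ≠ m := by decide
  obtain ⟨m, him, hkm⟩ := h_third i k
  rw [orbit_WE7_diffRoot_left hij him, ← orbit_WE7_diffRoot_swap him,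
    orbit_WE7_diffRoot_left him.symm hkm.symm, orbit_WE7_diffRoot_swap hkm,
    orbit_WE7_diffRoot_left hkm hkl]

theorem orbit_WE7_eq_of_mem_E7Roots (hα : α ∈ E7Roots) (hβ : β ∈ E7Roots) :
    MulAction.orbit WE7 α = MulAction.orbit WE7 β := by
  suffices h : ∀ γ ∈ E7Roots, ∃ i j, i ≠ j ∧
      MulAction.orbit WE7 γ = MulAction.orbit WE7 (diffRoot i j) by
    obtain ⟨i, j, hij, h_left⟩ := h α hα
    obtain ⟨k, l, hkl, h_right⟩ := h β hβ
    rw [h_left, h_right, orbit_WE7_diffRoot hij hkl]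
  intro γ hγ
  obtain ⟨i, j, hij, rfl⟩ | ⟨T, hT, rfl⟩ := mem_E7Roots_iff.mp hγ
  · exact ⟨i, j, hij, rfl⟩
  · obtain ⟨i, hi⟩ : T.Nonempty := Finset.card_pos.mp (by lia)
    obtain ⟨j, hj⟩ : ∃ j, j ∉ T := by
      by_contra! h_all
      rw [Finset.eq_univ_of_forall h_all, Finset.card_univ, Fintype.card_fin] at hT
      lia
    have hij : i ≠ j := fun h => hj (h ▸ hi)
    refine ⟨i, j, hij, orbit_WE7_eq_of_dotProduct_eq_one hγ (diffRoot_mem_E7Roots hij) ?_⟩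
    rw [dotProduct_comm, diffRoot_dotProduct, spinRoot_apply_of_mem hi,
      spinRoot_apply_of_notMem hj]
    norm_num

end RootOrbits

section TypeII

variable {A : Set V8} {a α : V8}

/-- The vector `(φ + α)/2`. For `α ∈ Δ(E₇)` these are the members `a` of type II frames with
`⟨φ, a⟩ = 1`. -/
def midpointPhi8 (α : V8) : V8 := (1 / 2 : ℂ) • (phi8 + α)

theorem midpointPhi8_injective : Function.Injective midpointPhi8 := fun α β h =>
  add_left_cancel (smul_right_injective V8 (by norm_num : (1 / 2 : ℂ) ≠ 0) h)

theorem midpointPhi8_two_smul_sub (a : V8) : midpointPhi8 ((2 : ℂ) • a - phi8) = a := by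
  rw [midpointPhi8, add_sub_cancel, smul_smul]
  norm_num

theorem phi8_dotProduct_midpointPhi8 (hα : α ∈ E7Roots) : phi8 ⬝ᵥ midpointPhi8 α = 1 := by
  rw [midpointPhi8, dotProduct_smul, dotProduct_add, phi8_dotProduct_self, hα.2.2, smul_eq_mul]
  norm_num

theorem IsClFrame.two_smul_sub_phi8_mem_E7Roots (hA : IsClFrame 8 A) (ha : a ∈ A)
    (h_phi : phi8 ⬝ᵥ a = 1) : (2 : ℂ) • a - phi8 ∈ E7Roots := by
  refine ⟨E8Lattice.sub_mem (hA.two_smul_mem ha) phi8_mem_E8Lattice, ?_, ?_⟩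
  all_goals simp only [sub_dotProduct, dotProduct_sub, smul_dotProduct, dotProduct_smul,
    dotProduct_comm a phi8, hA.dotProduct_self ha, h_phi, phi8_dotProduct_self, smul_eq_mul]
  all_goals norm_num

theorem apply_midpointPhi8 {w : V8 ≃ₗ[ℂ] V8} (hw : w ∈ WE7) (α : V8) :
    w (midpointPhi8 α) = midpointPhi8 (w α) := by
  rw [midpointPhi8, map_smul, map_add, show w phi8 = phi8 from (WE7_le hw).2, midpointPhi8]

theorem spinReflection_single_eq_midpointPhi8 :
    spinReflection {0, 1} (Pi.single 0 1) = midpointPhi8 (diffRoot 0 1) := by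
  rw [spinReflection_single (by decide), midpointPhi8, diffRoot]
  ext i
  fin_cases i <;> simp [spinRoot, phi8] <;> norm_num

theorem exists_typeIIFrame_midpointPhi8_mem (hα : α ∈ E7Roots) :
    ∃ A ∈ typeIIFrames, midpointPhi8 α ∈ A := by
  have h_root : diffRoot 0 1 ∈ E7Roots := diffRoot_mem_E7Roots (by decide)
  obtain ⟨⟨w, hw⟩, rfl⟩ : α ∈ MulAction.orbit WE7 (diffRoot 0 1) :=
    MulAction.orbit_eq_iff.mp (orbit_WE7_eq_of_mem_E7Roots hα h_root)
  have h_frame : IsClFrame 8 (spinReflection {0, 1} • stdFrame) :=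
    isClFrame_stdFrame.smul (spinReflection_mem_E8Aut (by decide))
  have h_mem : midpointPhi8 (diffRoot 0 1) ∈ spinReflection {0, 1} • stdFrame :=
    spinReflection_single_eq_midpointPhi8 ▸ spinReflection_single_mem {0, 1} 0
  have h_phi := (phi8_dotProduct_midpointPhi8 h_root).trans Int.cast_one.symm
  exact ⟨w • spinReflection {0, 1} • stdFrame,
    smul_mem_typeIIFrames hw ⟨h_frame, h_frame.c8TypeII_of_integral h_mem h_phi⟩,
    midpointPhi8 (diffRoot 0 1), h_mem, apply_midpointPhi8 hw _⟩

theorem exists_WE7_smul_eq_of_typeII {A B : Set V8} (hA : A ∈ typeIIFrames)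
    (hB : B ∈ typeIIFrames) : ∃ w ∈ WE7, w • A = B := by
  obtain ⟨a, ha, ha_phi⟩ := hA.2.exists_phi8_dotProduct_eq_one
  obtain ⟨b, hb, hb_phi⟩ := hB.2.exists_phi8_dotProduct_eq_one
  obtain ⟨⟨w, hw⟩, h_root⟩ := MulAction.orbit_eq_iff.mp <| orbit_WE7_eq_of_mem_E7Roots
    (hB.1.two_smul_sub_phi8_mem_E7Roots hb hb_phi) (hA.1.two_smul_sub_phi8_mem_E7Roots ha ha_phi)
  refine ⟨w, hw, (smul_mem_typeIIFrames hw hA).1.eq_of_mem hB.1 (Set.smul_mem_smul_set ha) ?_⟩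
  have h_apply : w a = b := by
    rw [← midpointPhi8_two_smul_sub a, apply_midpointPhi8 hw, ← midpointPhi8_two_smul_sub b]
    exact congrArg midpointPhi8 h_root
  change w a ∈ B
  rwa [h_apply]

theorem ncard_typeIIFrames : typeIIFrames.ncard = 63 := by
  choose! F hF h_mem using
    fun α (hα : α ∈ E7Roots) => exists_typeIIFrame_midpointPhi8_mem hα
  have h_eq : ∀ A ∈ typeIIFrames, ∀ α ∈ E7Roots, F α = A ↔ midpointPhi8 α ∈ A :=
    fun A hA α hα =>
      ⟨fun h => h ▸ h_mem α hα, fun h => (hF α hα).1.eq_of_mem hA.1 (h_mem α hα) h⟩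
  have h_root : ∀ A ∈ typeIIFrames, ∀ a ∈ A, phi8 ⬝ᵥ a = 1 → (2 : ℂ) • a - phi8 ∈ E7Roots :=
    fun A hA a => hA.1.two_smul_sub_phi8_mem_E7Roots
  have h_fibre : ∀ A ∈ typeIIFrames, {α ∈ E7Roots | F α = A}.ncard = 2 := fun A hA => by
    have h_image : midpointPhi8 '' {α ∈ E7Roots | F α = A} = {a ∈ A | phi8 ⬝ᵥ a = 1} := by
      ext a
      constructor
      · rintro ⟨α, ⟨hα, hFα⟩, rfl⟩
        exact ⟨(h_eq A hA α hα).mp hFα, phi8_dotProduct_midpointPhi8 hα⟩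
      · rintro ⟨ha, h_phi⟩
        refine ⟨_, ⟨h_root A hA a ha h_phi, (h_eq A hA _ (h_root A hA a ha h_phi)).mpr ?_⟩,
          midpointPhi8_two_smul_sub a⟩
        rwa [midpointPhi8_two_smul_sub]
    rw [← Set.ncard_image_of_injective _ midpointPhi8_injective, h_image]
    exact hA.2.1
  have h_range : F '' E7Roots = typeIIFrames := by
    refine Set.Subset.antisymm (Set.image_subset_iff.mpr hF) fun A hA => ?_
    obtain ⟨a, ha, h_phi⟩ := hA.2.exists_phi8_dotProduct_eq_one
    refine ⟨_, h_root A hA a ha h_phi, (h_eq A hA _ (h_root A hA a ha h_phi)).mpr ?_⟩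
    rwa [midpointPhi8_two_smul_sub]
  have h_count := ncard_eq_ncard_image_mul
    (Set.finite_of_ncard_ne_zero (ncard_E7Roots.trans_ne (by norm_num))) F 2
    fun A hA => h_fibre A (h_range ▸ hA)
  rw [h_range, ncard_E7Roots] at h_count
  lia

end TypeII

section TypeI

variable {A : Set V8} {a x : V8} {T : Finset (Fin 8)}

/-- The type I frames `A` for which `2a` has half-integral rather than integral coordinates, for
one and hence for all `a ∈ A`. -/
def halfTypeIFrames : Set (Set V8) :=
  {A ∈ typeIFrames | ∃ a ∈ A, (2 : ℂ) • a - phi8 ∈ intVec.range}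

theorem IsClFrame.nonempty (hA : IsClFrame 8 A) : A.Nonempty := by
  obtain ⟨a, rfl, -⟩ := hA
  exact ⟨a 0, .inl ⟨0, rfl⟩⟩

theorem intCast_ne_one_half (k : ℤ) : (k : ℂ) ≠ 1 / 2 := fun h => by
  have h_cast : ((2 * k : ℤ) : ℂ) = (1 : ℤ) := by
    push_cast
    linear_combination 2 * h
  have h_int : 2 * k = 1 := by exact_mod_cast h_cast
  lia

theorem phi8_notMem_range_intVec : phi8 ∉ intVec.range := fun ⟨n, hn⟩ =>
  intCast_ne_one_half (n 0) (congrFun hn 0)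

theorem sub_phi8_mem_range_iff (hx : x ∈ E8Lattice) :
    x - phi8 ∈ intVec.range ↔ x ∉ intVec.range := by
  refine ⟨fun h_half h_int => phi8_notMem_range_intVec ?_, fun h => ?_⟩
  · simpa using sub_mem h_int h_half
  · exact isIntVec_iff.mp (hx.1.resolve_left (isIntVec_iff.not.mpr h))

theorem mem_range_intVec_of_apply_eq_zero {i : Fin 8} (hx : x ∈ E8Lattice) (h : x i = 0) :
    x ∈ intVec.range := by
  by_contra h_half
  obtain ⟨n, hn⟩ := (sub_phi8_mem_range_iff hx).mpr h_half
  refine intCast_ne_one_half (-n i) ?_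
  have h_apply := congrFun hn i
  rw [intVec_apply, Pi.sub_apply, h, phi8] at h_apply
  rw [Int.cast_neg, h_apply]
  ring

theorem mem_halfTypeIFrames_iff (hA : A ∈ typeIFrames) (ha : a ∈ A) :
    A ∈ halfTypeIFrames ↔ (2 : ℂ) • a ∉ intVec.range := by
  rw [← sub_phi8_mem_range_iff (hA.1.two_smul_mem ha)]
  refine ⟨?_, fun h => ⟨hA, a, ha, h⟩⟩
  rintro ⟨-, b, hb, h⟩
  obtain ⟨n, hn⟩ := exists_intVec_eq_two_smul (hA.1.sub_mem ha hb)
  convert add_mem (⟨n, hn.symm⟩ : (2 : ℂ) • (a - b) ∈ intVec.range) h using 1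
  rw [smul_sub]
  abel

theorem phi8Reflection_smul_smul (A : Set V8) : phi8Reflection • phi8Reflection • A = A := by
  rw [smul_smul, phi8Reflection, rootReflection_mul_self, one_smul]

theorem phi8_dotProduct_phi8Reflection (x : V8) :
    phi8 ⬝ᵥ phi8Reflection x = -(phi8 ⬝ᵥ x) := by
  rw [phi8Reflection_apply, dotProduct_sub, dotProduct_smul, phi8_dotProduct_self, smul_eq_mul]
  ring

theorem phi8Reflection_smul_mem_typeIFrames (hA : A ∈ typeIFrames) :
    phi8Reflection • A ∈ typeIFrames := by
  refine ⟨hA.1.smul (rootReflection_mem_E8Aut _ phi8_mem_E8Lattice), ?_⟩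
  rintro _ ⟨a, ha, rfl⟩
  change phi8 ⬝ᵥ phi8Reflection a = _ ∨ phi8 ⬝ᵥ phi8Reflection a = _
  rw [phi8_dotProduct_phi8Reflection, neg_inj, neg_eq_iff_eq_neg]
  exact (hA.2 a ha).symm

theorem phi8Reflection_smul_mem_halfTypeIFrames_iff (hA : A ∈ typeIFrames) :
    phi8Reflection • A ∈ halfTypeIFrames ↔ A ∉ halfTypeIFrames := by
  obtain ⟨a, ha⟩ := hA.1.nonempty
  have h_image : (2 : ℂ) • phi8Reflection a ∈ intVec.range ↔
      (2 : ℂ) • a - phi8 ∈ intVec.range := by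
    have h_two : phi8 + phi8 ∈ intVec.range := ⟨1, phi8_add_phi8.symm⟩
    rw [phi8Reflection_apply, smul_sub, smul_smul]
    rcases hA.2 a ha with h | h
    · rw [show phi8 ⬝ᵥ a = 1 / 2 from h]
      norm_num
    · rw [show phi8 ⬝ᵥ a = -(1 / 2) from h]
      convert add_mem_cancel_right h_two using 2
      module
  rw [mem_halfTypeIFrames_iff (phi8Reflection_smul_mem_typeIFrames hA)
    (Set.smul_mem_smul_set ha), mem_halfTypeIFrames_iff hA ha,
    ← sub_phi8_mem_range_iff (hA.1.two_smul_mem ha)]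
  exact h_image.not

theorem typeIFrames_eq :
    typeIFrames = halfTypeIFrames ∪ (phi8Reflection • ·) '' halfTypeIFrames := by
  ext A
  constructor
  · intro hA
    by_cases h : A ∈ halfTypeIFrames
    · exact .inl h
    · exact .inr ⟨_, (phi8Reflection_smul_mem_halfTypeIFrames_iff hA).mpr h,
        phi8Reflection_smul_smul A⟩
  · rintro (h | ⟨B, hB, rfl⟩)
    · exact h.1
    · exact phi8Reflection_smul_mem_typeIFrames hB.1

theorem spinReflection_compl (T : Finset (Fin 8)) : spinReflection Tᶜ = spinReflection T := by
  refine LinearEquiv.ext fun x => ?_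
  simp only [spinReflection, rootReflection_apply, spinRoot_compl, neg_dotProduct, neg_smul,
    smul_neg, neg_neg]

theorem spinReflection_smul_mem_halfTypeIFrames (h_zero : 0 ∈ T) (h_card : 4 ∣ T.card) :
    spinReflection T • stdFrame ∈ halfTypeIFrames := by
  obtain ⟨m, hm⟩ := h_card
  have h_frame : IsClFrame 8 (spinReflection T • stdFrame) :=
    isClFrame_stdFrame.smul (spinReflection_mem_E8Aut ⟨2 * m, by lia⟩)
  have h_mem := spinReflection_single_mem T 0
  refine ⟨⟨h_frame, h_frame.c8TypeI_of_odd h_mem (k := 3 - 2 * m) ⟨1 - m, by ring⟩ ?_⟩,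
    _, h_mem, ?_⟩
  · rw [phi8_dotProduct_spinReflection_single h_zero, hm]
    push_cast
    ring
  · rw [spinReflection_single h_zero, spinRoot_eq]
    refine ⟨Pi.single 0 1 + Pi.single 0 1 - fun i => if i ∈ T then 1 else 0, ?_⟩
    rw [map_sub, map_add, intVec_single]
    module

theorem exists_apply_eq_three_quarters (hA : A ∈ halfTypeIFrames) :
    ∃ a ∈ A, (2 : ℂ) • a - phi8 ∈ intVec.range ∧ ∃ i, a i = 3 / 4 := by
  obtain ⟨⟨h_frame, -⟩, a, ha, h_half⟩ := hA
  obtain ⟨n, hn⟩ := id h_half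
  have h_coord : ∀ i, ((1 + 2 * n i : ℤ) : ℂ) = 4 * a i := fun i => by
    have h_apply := congrFun hn i
    rw [intVec_apply, Pi.sub_apply, Pi.smul_apply, smul_eq_mul, phi8] at h_apply
    push_cast
    linear_combination 2 * h_apply
  have h_norm : (fun i => 1 + 2 * n i) ⬝ᵥ (fun i => 1 + 2 * n i) = Fintype.card (Fin 8) + 8 := by
    have h_cast : ∑ i, ((1 + 2 * n i : ℤ) : ℂ) * ((1 + 2 * n i : ℤ) : ℂ) = 16 := calc
      _ = 16 * a ⬝ᵥ a := by
        rw [dotProduct, Finset.mul_sum]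
        exact Finset.sum_congr rfl fun i _ => by rw [h_coord]; ring
      _ = 16 := by rw [h_frame.dotProduct_self ha, mul_one]
    rw [Fintype.card_fin, dotProduct]
    exact_mod_cast h_cast
  have h_odd : ∀ i, Odd (1 + 2 * n i) := fun i => odd_one.add_even (even_two_mul _)
  obtain ⟨i, hi | hi⟩ := exists_eq_three_or_neg_three h_odd h_norm
  · refine ⟨a, ha, h_half, i, ?_⟩
    have h_apply := h_coord i
    rw [hi] at h_apply
    push_cast at h_apply
    linear_combination -h_apply / 4
  · refine ⟨-a, h_frame.neg_mem ha, ?_, i, ?_⟩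
    · convert sub_mem (neg_mem h_half) (⟨1, phi8_add_phi8.symm⟩ : phi8 + phi8 ∈ intVec.range)
        using 1
      module
    · have h_apply := h_coord i
      rw [hi] at h_apply
      push_cast at h_apply
      rw [Pi.neg_apply]
      linear_combination h_apply / 4

theorem four_dvd_card_of_mem_typeIFrame (hA : A ∈ typeIFrames) {i : Fin 8} (hi : i ∈ T)
    (h_mem : spinReflection T (Pi.single i 1) ∈ A) : 4 ∣ T.card := by
  rcases hA.2 _ h_mem with h | h
  all_goals
    have h_phi := (phi8_dotProduct_spinReflection_single hi).symm.trans h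
  · have h_card : (T.card : ℂ) = (4 : ℕ) := by
      push_cast
      linear_combination -4 * h_phi
    exact ⟨1, by exact_mod_cast h_card⟩
  · have h_card : (T.card : ℂ) = (8 : ℕ) := by
      push_cast
      linear_combination -4 * h_phi
    exact ⟨2, by exact_mod_cast h_card⟩

theorem exists_spinReflection_smul_eq (hA : A ∈ halfTypeIFrames) :
    ∃ T : Finset (Fin 8), 4 ∣ T.card ∧ spinReflection T • stdFrame = A := by
  obtain ⟨a, ha, ⟨n, hn⟩, i, hi⟩ := exists_apply_eq_three_quarters hA
  have h_root : phi8 + intVec (Pi.single i 1 + Pi.single i 1 - n - 1) =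
      (2 : ℂ) • (Pi.single i 1 - a) := by
    rw [map_sub, map_sub, map_add, intVec_single, hn, ← phi8_add_phi8]
    module
  obtain ⟨T, hT⟩ : ∃ T, (2 : ℂ) • (Pi.single i 1 - a) = spinRoot T := by
    rw [← h_root]
    refine exists_eq_spinRoot ?_
    simp only [h_root, smul_dotProduct, dotProduct_smul, sub_dotProduct, dotProduct_sub,
      single_one_dotProduct, dotProduct_single_one, hA.1.1.dotProduct_self ha, smul_eq_mul]
    norm_num [hi]
  have hiT : i ∈ T := by
    by_contra h
    have h_apply := congrFun hT i
    rw [spinRoot_apply_of_notMem h, Pi.smul_apply, Pi.sub_apply, Pi.single_eq_same, hi,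
      smul_eq_mul] at h_apply
    norm_num at h_apply
  have h_image : spinReflection T (Pi.single i 1) = a := by
    rw [spinReflection_single hiT, ← hT]
    module
  have h_dvd := four_dvd_card_of_mem_typeIFrame hA.1 hiT (h_image.symm ▸ ha)
  refine ⟨T, h_dvd, ?_⟩
  refine IsClFrame.eq_of_mem (isClFrame_stdFrame.smul (spinReflection_mem_E8Aut ?_)) hA.1.1
    (spinReflection_single_mem T i) (h_image.symm ▸ ha)
  exact even_iff_two_dvd.mpr (dvd_trans (by norm_num) h_dvd)

theorem halfTypeIFrames_eq : halfTypeIFrames = (fun T => spinReflection T • stdFrame) ''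
    (({T | 0 ∈ T ∧ 4 ∣ T.card} : Finset (Finset (Fin 8))) : Set (Finset (Fin 8))) := by
  ext A
  constructor
  · intro hA
    obtain ⟨T, h_card, rfl⟩ := exists_spinReflection_smul_eq hA
    by_cases h_zero : 0 ∈ T
    · exact ⟨T, by simp [h_zero, h_card], rfl⟩
    · refine ⟨Tᶜ, ?_, congrArg (· • stdFrame) (spinReflection_compl T)⟩
      have h_compl : 4 ∣ Tᶜ.card := by
        rw [Finset.card_compl, Fintype.card_fin]
        exact Nat.dvd_sub (by norm_num) h_card
      simp [h_zero, h_compl]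
  · rintro ⟨T, hT, rfl⟩
    obtain ⟨h_zero, h_card⟩ : 0 ∈ T ∧ 4 ∣ T.card := by simpa using hT
    exact spinReflection_smul_mem_halfTypeIFrames h_zero h_card

theorem injOn_spinReflection_smul_stdFrame :
    Set.InjOn (fun T => spinReflection T • stdFrame)
      (({T | 0 ∈ T ∧ 4 ∣ T.card} : Finset (Finset (Fin 8))) : Set (Finset (Fin 8))) := by
  suffices h : ∀ S T : Finset (Fin 8), 0 ∈ S → 0 ∈ T → 4 ∣ S.card →
      spinReflection S • stdFrame = spinReflection T • stdFrame → T ⊆ S by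
    intro S hS T hT hST
    obtain ⟨hS_zero, hS_card⟩ : 0 ∈ S ∧ 4 ∣ S.card := by simpa using hS
    obtain ⟨hT_zero, hT_card⟩ : 0 ∈ T ∧ 4 ∣ T.card := by simpa using hT
    exact (h T S hT_zero hS_zero hT_card hST.symm).antisymm (h S T hS_zero hT_zero hS_card hST)
  intro S T hS_zero hT_zero hS_card hST i hiT
  by_contra hiS
  have h_frame := (spinReflection_smul_mem_halfTypeIFrames hS_zero hS_card).1.1
  have h_diff := h_frame.sub_mem (spinReflection_single_mem S 0)
    (hST ▸ spinReflection_single_mem T 0)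
  rw [spinReflection_single hS_zero, spinReflection_single hT_zero, sub_sub_sub_cancel_left,
    ← smul_sub] at h_diff
  obtain ⟨n, hn⟩ := mem_range_intVec_of_apply_eq_zero (i := 0) h_diff (by
    rw [Pi.smul_apply, Pi.sub_apply, spinRoot_apply_of_mem hS_zero,
      spinRoot_apply_of_mem hT_zero, sub_self, smul_zero])
  have h_apply := congrFun hn i
  rw [intVec_apply, Pi.smul_apply, Pi.sub_apply, spinRoot_apply_of_mem hiT,
    spinRoot_apply_of_notMem hiS, smul_eq_mul] at h_apply
  exact intCast_ne_one_half (n i) (h_apply.trans (by norm_num))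

theorem ncard_halfTypeIFrames : halfTypeIFrames.ncard = 36 := by
  rw [halfTypeIFrames_eq, injOn_spinReflection_smul_stdFrame.ncard_image, Set.ncard_coe_finset]
  decide +kernel

theorem ncard_typeIFrames : typeIFrames.ncard = 72 := by
  have h_finite : halfTypeIFrames.Finite :=
    Set.finite_of_ncard_ne_zero (ncard_halfTypeIFrames.trans_ne (by norm_num))
  have h_disjoint : Disjoint halfTypeIFrames ((phi8Reflection • ·) '' halfTypeIFrames) := by
    rw [Set.disjoint_left]
    rintro _ h ⟨B, hB, rfl⟩
    exact (phi8Reflection_smul_mem_halfTypeIFrames_iff hB.1).mp h hB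
  rw [typeIFrames_eq, Set.ncard_union_eq h_disjoint h_finite (h_finite.image _),
    Set.ncard_image_of_injective _ (MulAction.injective _), ncard_halfTypeIFrames]

theorem spinReflection_mem_WE7 (hT : T.card = 4) : spinReflection T ∈ WE7 :=
  rootReflection_mem_WE7 _ (spinRoot_mem_E7Roots hT).1 (spinRoot_mem_E7Roots hT).2.2

-- The roots of `{0,1,2,3}`, `{0,1,4,5}`, `{0,1,6,7}` are pairwise orthogonal with sum
-- `2 • (e₀ + e₁) - φ`, so the product of their reflections takes `e₀` to `φ/2 - e₁ = r_φ(-e₁)`.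
theorem exists_WE7_apply_single_eq_phi8Reflection :
    ∃ w ∈ WE7, w (Pi.single 0 1) = phi8Reflection (-Pi.single 1 1) := by
  have h_fix : ∀ S T, spinRoot S ⬝ᵥ spinRoot T = 0 → spinReflection S (spinRoot T) = spinRoot T :=
    fun S T h => by rw [spinReflection, rootReflection_apply, h, zero_smul, sub_zero]
  have h_orth : spinRoot {0, 1, 4, 5} ⬝ᵥ spinRoot {0, 1, 6, 7} = 0 ∧
      spinRoot {0, 1, 2, 3} ⬝ᵥ spinRoot {0, 1, 6, 7} = 0 ∧
      spinRoot {0, 1, 2, 3} ⬝ᵥ spinRoot {0, 1, 4, 5} = 0 := by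
    simp [spinRoot, dotProduct, Fin.sum_univ_eight]
  have h_sum : spinRoot {0, 1, 2, 3} + spinRoot {0, 1, 4, 5} + spinRoot {0, 1, 6, 7} =
      (2 : ℂ) • (Pi.single 0 1 + Pi.single 1 1) - phi8 := by
    ext i
    fin_cases i <;> simp [spinRoot, phi8] <;> norm_num
  refine ⟨spinReflection {0, 1, 2, 3} * spinReflection {0, 1, 4, 5} * spinReflection {0, 1, 6, 7},
    mul_mem (mul_mem (spinReflection_mem_WE7 rfl) (spinReflection_mem_WE7 rfl))
      (spinReflection_mem_WE7 rfl), ?_⟩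
  rw [LinearEquiv.mul_apply, LinearEquiv.mul_apply, spinReflection_single (by decide), map_sub,
    map_smul, h_fix _ _ h_orth.1, spinReflection_single (by decide), map_sub, map_sub, map_smul,
    map_smul, h_fix _ _ h_orth.2.1, h_fix _ _ h_orth.2.2, spinReflection_single (by decide),
    phi8Reflection_apply, dotProduct_neg, phi8_dotProduct_single]
  linear_combination (norm := module) (-(1 / 2) : ℂ) • h_sum

theorem phi8Reflection_smul_stdFrame_mem_orbit :
    phi8Reflection • stdFrame ∈ MulAction.orbit WE7 stdFrame := by
  obtain ⟨w, hw, h_apply⟩ := exists_WE7_apply_single_eq_phi8Reflection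
  refine ⟨⟨w, hw⟩, IsClFrame.eq_of_mem (isClFrame_stdFrame.smul (WE7_le hw).1)
    (isClFrame_stdFrame.smul (rootReflection_mem_E8Aut _ phi8_mem_E8Lattice))
    (Set.smul_mem_smul_set (single_mem_stdFrame 0)) ?_⟩
  change w (Pi.single 0 1) ∈ _
  rw [h_apply]
  exact Set.smul_mem_smul_set (isClFrame_stdFrame.neg_mem (single_mem_stdFrame 1))

theorem halfTypeIFrames_subset_orbit : halfTypeIFrames ⊆ MulAction.orbit WE7 stdFrame := by
  rw [halfTypeIFrames_eq]
  rintro _ ⟨T, hT, rfl⟩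
  obtain ⟨h_zero, h_dvd⟩ : 0 ∈ T ∧ 4 ∣ T.card := by simpa using hT
  have h_pos : 0 < T.card := Finset.card_pos.mpr ⟨0, h_zero⟩
  have h_le : T.card ≤ 8 := T.card_le_univ
  obtain h_four | h_eight : T.card = 4 ∨ T.card = 8 := by lia
  · exact ⟨⟨spinReflection T, spinReflection_mem_WE7 h_four⟩, rfl⟩
  · obtain rfl : T = Finset.univ := Finset.card_eq_iff_eq_univ T |>.mp h_eight
    have h_phi8 : spinReflection Finset.univ = phi8Reflection := by
      simp only [spinReflection, phi8Reflection, spinRoot_univ]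
    change spinReflection Finset.univ • stdFrame ∈ _
    rw [h_phi8]
    exact phi8Reflection_smul_stdFrame_mem_orbit

theorem typeIFrames_subset_orbit : typeIFrames ⊆ MulAction.orbit WE7 stdFrame := by
  rw [typeIFrames_eq]
  rintro _ (h | ⟨A, hA, rfl⟩)
  · exact halfTypeIFrames_subset_orbit h
  · obtain ⟨w, rfl⟩ := halfTypeIFrames_subset_orbit hA
    obtain ⟨v, hv⟩ := phi8Reflection_smul_stdFrame_mem_orbit
    refine ⟨w * v, ?_⟩
    calc (w * v) • stdFrame = w.1 • phi8Reflection • stdFrame :=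
        (mul_smul w v stdFrame).trans (congrArg (w.1 • ·) hv)
      _ = phi8Reflection • w.1 • stdFrame := by
        rw [smul_smul, smul_smul, (commute_phi8Reflection w.2).eq]

theorem exists_WE7_smul_eq_of_typeI {A B : Set V8} (hA : A ∈ typeIFrames)
    (hB : B ∈ typeIFrames) : ∃ w ∈ WE7, w • A = B := by
  have h_orbit := MulAction.orbit_eq_iff.mpr (typeIFrames_subset_orbit hA)
  obtain ⟨⟨w, hw⟩, h⟩ := h_orbit ▸ typeIFrames_subset_orbit hB
  exact ⟨w, hw, h⟩

end TypeI

/-- Proposition 3.1: every `C₈`-frame is of type I or of type II; there are `72` of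
type I and `63` of type II, and each of the two families is a single `W(E₇)`-orbit. -/
theorem statement6 :
    (∀ A : Set V8, IsClFrame 8 A → C8TypeI A ∨ C8TypeII A) ∧
    {A : Set V8 | IsClFrame 8 A ∧ C8TypeI A}.ncard = 72 ∧
    {A : Set V8 | IsClFrame 8 A ∧ C8TypeII A}.ncard = 63 ∧
    (∀ w : V8 ≃ₗ[ℂ] V8, w ∈ WE7 → ∀ A : Set V8,
      IsClFrame 8 A ∧ C8TypeI A → IsClFrame 8 (⇑w '' A) ∧ C8TypeI (⇑w '' A)) ∧
    (∀ A B : Set V8, IsClFrame 8 A ∧ C8TypeI A → IsClFrame 8 B ∧ C8TypeI B →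
      ∃ w : V8 ≃ₗ[ℂ] V8, w ∈ WE7 ∧ ⇑w '' A = B) ∧
    (∀ w : V8 ≃ₗ[ℂ] V8, w ∈ WE7 → ∀ A : Set V8,
      IsClFrame 8 A ∧ C8TypeII A → IsClFrame 8 (⇑w '' A) ∧ C8TypeII (⇑w '' A)) ∧
    (∀ A B : Set V8, IsClFrame 8 A ∧ C8TypeII A → IsClFrame 8 B ∧ C8TypeII B →
      ∃ w : V8 ≃ₗ[ℂ] V8, w ∈ WE7 ∧ ⇑w '' A = B) := by
  exact ⟨fun _ hA => hA.c8TypeI_or_c8TypeII, ncard_typeIFrames, ncard_typeIIFrames,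
    fun _ hw _ hA => smul_mem_typeIFrames hw hA,
    fun _ _ hA hB => exists_WE7_smul_eq_of_typeI hA hB,
    fun _ hw _ hA => smul_mem_typeIIFrames hw hA,
    fun _ _ hA hB => exists_WE7_smul_eq_of_typeII hA hB⟩
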